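/- The following three statements are equivalent for a matching problem with normal form S*: (a) the matching problem has exactly one stable matching; (b) the digraph D(S*) contains no directed cycle; (c) every worker belongs to exactly one pair of S* and every firm belongs to exactly one pair of S*. -/

import Mathlib

/-- `(w,f)` blocks the matching `μ`: `f ≻_w μ(w)` and `w ≻_f μ⁻¹(f)`.
`prefW w f f'` means worker `w` strictly prefers firm `f` to firm `f'`;
`prefF f w w'` means firm `f` strictly prefers worker `w` to worker `w'`. -/
def Blocks {W F : Type*} (prefW : W → F → F → Prop) (prefF : F → W → W → Prop)
    (μ : W ≃ F) (w : W) (f : F) : Prop :=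
  prefW w f (μ w) ∧ prefF f w (μ.symm f)

/-- A matching is stable if no pair blocks it. -/
def IsStableMatching {W F : Type*} (prefW : W → F → F → Prop)
    (prefF : F → W → W → Prop) (μ : W ≃ F) : Prop :=
  ∀ w f, ¬ Blocks prefW prefF μ w f

/-- A pair `(w,f)` is unattractive in `S`. -/
def Unattractive {W F : Type*} (prefW : W → F → F → Prop) (prefF : F → W → W → Prop)
    (S : Set (W × F)) (w : W) (f : F) : Prop :=
  (∃ f', (w, f') ∈ S ∧ prefW w f' f ∧
      ∀ w', w' ≠ w → (w', f') ∈ S → prefF f' w w') ∨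
  (∃ w', (w', f) ∈ S ∧ prefF f w' w ∧
      ∀ f'', f'' ≠ f → (w', f'') ∈ S → prefW w' f f'')

/-- `delta S` is `S` with all pairs unattractive in `S` removed. -/
def delta {W F : Type*} (prefW : W → F → F → Prop) (prefF : F → W → W → Prop)
    (S : Set (W × F)) : Set (W × F) :=
  {p ∈ S | ¬ Unattractive prefW prefF S p.1 p.2}

/-- The normal form: the fixed point of `delta` reached by iterating from `W × F`.
Since `delta S ⊆ S` and `W × F` is finite, `Fintype.card (W × F)` iterations suffice. -/
def NormalForm (W F : Type*) [Fintype W] [Fintype F]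
    (prefW : W → F → F → Prop) (prefF : F → W → W → Prop) : Set (W × F) :=
  (delta prefW prefF)^[Fintype.card (W × F)] Set.univ

/-- `μ` is `S`-stable: `S`-admissible and no pair of `S` blocks it within `S`. -/
def SStable {W F : Type*} (prefW : W → F → F → Prop) (prefF : F → W → W → Prop)
    (S : Set (W × F)) (μ : W ≃ F) : Prop :=
  (∀ w, (w, μ w) ∈ S) ∧
  ∀ w f, (w, f) ∈ S → ¬ (prefW w f (μ w) ∧ prefF f w (μ.symm f))

/-- Arcs of the matching digraph `D(S)`: from `(w,f)` to `(w,f')` whenever `f' ≻_w f`,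
and from `(w,f)` to `(w',f)` whenever `w' ≻_f w`. -/
def Arc {W F : Type*} (prefW : W → F → F → Prop) (prefF : F → W → W → Prop)
    (S : Set (W × F)) (p q : W × F) : Prop :=
  p ∈ S ∧ q ∈ S ∧
    ((p.1 = q.1 ∧ prefW p.1 q.2 p.2) ∨ (p.2 = q.2 ∧ prefF p.2 q.1 p.1))

/-- `D(S)` contains a directed cycle: distinct vertices `c 0, …, c (n-1)` with `n ≥ 1`,
`c n = c 0`, and an arc from each vertex to the next. -/
def HasDirectedCycle {W F : Type*} (prefW : W → F → F → Prop)
    (prefF : F → W → W → Prop) (S : Set (W × F)) : Prop :=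
  ∃ (n : ℕ) (c : Fin (n + 1) → W × F), 0 < n ∧
    Function.Injective (fun i : Fin n => c i.castSucc) ∧
    c (Fin.last n) = c 0 ∧
    ∀ i : Fin n, Arc prefW prefF S (c i.castSucc) (c i.succ)

/-- The preference lists possess a cycle: there are `k ≥ 2`, distinct workers
`w_1, …, w_k` and distinct firms `f_1, …, f_k` (indexed by `ZMod k`) with
`f_{j+1} ≻_{w_j} f_j` and `w_j ≻_{f_j} w_{j-1}` for all `j`, indices modulo `k`. -/
def PrefCycle {W F : Type*} (prefW : W → F → F → Prop)
    (prefF : F → W → W → Prop) : Prop :=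
  ∃ k : ℕ, 2 ≤ k ∧ ∃ (ws : ZMod k → W) (fs : ZMod k → F),
    Function.Injective ws ∧ Function.Injective fs ∧
    ∀ j : ZMod k, prefW (ws j) (fs (j + 1)) (fs j) ∧ prefF (fs j) (ws j) (ws (j - 1))

/-!
Write `S` for the normal form. Deleting unattractive pairs destroys neither a stable matching nor
the reason for which a pair was deleted, so `S` consists exactly of the pairs that are not
unattractive in `S`, and it contains every stable matching. Therefore, if `f` is the best firm of
`w` in `S`, then `w` is the worst worker of `f` in `S`, and symmetrically. Two consequences follow.

* Distinct workers have distinct best firms in `S`. Matching every worker with the best firm is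
  therefore possible, and it gives a stable matching; so does matching every firm with its best
  worker. If there is only one stable matching, every partner is simultaneously best and worst,
  and `S` is the graph of that matching.
* The head of an arc of `D(S)` is never a sink: if `(w, f')` were a sink reached from `(w, f)`, then
  `w` would be the best worker of `f'`, hence `f'` the worst firm of `w`, although `w` prefers `f'`
  to `f`. Since `D(S)` is finite, a single arc already forces a cycle.
-/

section Best

variable {α : Type*} {r : α → α → Prop} {A B : Set α} {a b : α}

/-- `a` is the best element of `A` for the strict preference `r`. Dominance is required only over
the other elements of `A`, as in `Unattractive`. -/
def IsBest (r : α → α → Prop) (A : Set α) (a : α) : Prop :=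
  a ∈ A ∧ ∀ b, b ≠ a → b ∈ A → r a b

theorem IsBest.not_rel [Std.Asymm r] (ha : IsBest r A a) (hb : b ∈ A) : ¬ r b a := by
  intro hba
  have hne : b ≠ a := fun h => asymm_of r (h ▸ hba) (h ▸ hba)
  exact asymm_of r hba (ha.2 b hne hb)

theorem IsBest.eq [Std.Asymm r] (ha : IsBest r A a) (hb : IsBest r A b) : a = b := by
  by_contra hne
  exact ha.not_rel hb.1 (hb.2 a hne ha.1)

theorem IsBest.mono (ha : IsBest r A a) (hBA : B ⊆ A) (haB : a ∈ B) : IsBest r B a :=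
  ⟨haB, fun b hne hb => ha.2 b hne (hBA hb)⟩

theorem isBest_of_forall_not_rel [Std.Trichotomous r] (ha : a ∈ A) (h : ∀ b ∈ A, ¬ r b a) :
    IsBest r A a :=
  ⟨ha, fun b hne hb => by
    rcases trichotomous_of r a b with hab | rfl | hba
    · exact hab
    · exact absurd rfl hne
    · exact absurd hba (h b hb)⟩

theorem exists_isBest [Finite α] [IsStrictTotalOrder α r] (hA : A.Nonempty) :
    ∃ a, IsBest r A a := by
  obtain ⟨a, ha, hmin⟩ := (Finite.wellFounded_of_trans_of_irrefl r).has_min A hA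
  exact ⟨a, isBest_of_forall_not_rel ha hmin⟩

end Best

section Iteration

variable {α : Type*} [Finite α]

theorem isFixedPt_iterate_card {g : Set α → Set α} (hg : ∀ s, g s ⊆ s) (s : Set α) :
    Function.IsFixedPt g (g^[Nat.card α] s) := by
  let u : ℕ → ℕ := fun k => (g^[k] s)ᶜ.ncard
  have hsub : ∀ k, (g^[k] s)ᶜ ⊆ (g^[k + 1] s)ᶜ := fun k => by
    rw [Function.iterate_succ_apply']
    exact Set.compl_subset_compl.2 (hg _)
  have hmono : Monotone u := monotone_nat_of_le_succ fun k => Set.ncard_le_ncard (hsub k)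
  have hfix : ∀ k, u k = u (k + 1) → g^[k] s = g^[k + 1] s := fun k hk =>
    compl_injective (Set.eq_of_subset_of_ncard_le (hsub k) hk.ge)
  have hstab : ∀ k, u k = u (k + 1) → u (k + 1) = u (k + 2) := fun k hk => by
    simp only [u, Function.iterate_succ_apply' g (k + 1), ← hfix k hk,
      ← Function.iterate_succ_apply' g k]
  have hcard : u (Nat.card α + 1) = u (Nat.card α) :=
    Nat.stabilises_of_monotone hmono (fun k => Set.ncard_le_card _) hstab (Nat.le_succ _)
  rw [Function.IsFixedPt, ← Function.iterate_succ_apply' g]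
  exact (hfix _ hcard.symm).symm

theorem exists_iterate_mem_periodicPts (f : α → α) (x : α) :
    ∃ n, f^[n] x ∈ Function.periodicPts f := by
  obtain ⟨i, j, hij, heq⟩ : ∃ i j, i < j ∧ f^[i] x = f^[j] x := by
    obtain ⟨i, j, hne, heq⟩ := Finite.exists_ne_map_eq_of_infinite fun n => f^[n] x
    rcases hne.lt_or_gt with hij | hji
    · exact ⟨i, j, hij, heq⟩
    · exact ⟨j, i, hji, heq.symm⟩
  refine ⟨i, Function.mk_mem_periodicPts (Nat.sub_pos_of_lt hij) ?_⟩
  rw [Function.IsPeriodicPt, Function.IsFixedPt, ← Function.iterate_add_apply,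
    Nat.sub_add_cancel hij.le, heq]

/-- Following chosen successors ends in a periodic orbit, and one minimal period of it is a cycle
without repeated vertices. -/
theorem exists_cycle_of_forall_exists_rel {r : α → α → Prop} {T : Set α} (hT : T.Nonempty)
    (h : ∀ a ∈ T, ∃ b ∈ T, r a b) :
    ∃ (n : ℕ) (c : Fin (n + 1) → α), 0 < n ∧
      Function.Injective (fun i : Fin n => c i.castSucc) ∧
      c (Fin.last n) = c 0 ∧ ∀ i : Fin n, r (c i.castSucc) (c i.succ) := by
  obtain ⟨a, ha⟩ := hT
  have : Nonempty α := ⟨a⟩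
  choose! next hnext hrel using h
  obtain ⟨m, hm⟩ := exists_iterate_mem_periodicPts next a
  have hmem : ∀ k, next^[k] (next^[m] a) ∈ T := fun k =>
    Set.MapsTo.iterate hnext k (Set.MapsTo.iterate hnext m ha)
  refine ⟨Function.minimalPeriod next (next^[m] a), fun i => next^[i] (next^[m] a),
    Function.minimalPeriod_pos_of_mem_periodicPts hm, fun i j hij => ?_, ?_, fun i => ?_⟩
  · exact Fin.ext (Function.iterate_injOn_Iio_minimalPeriod i.2 j.2 hij)
  · exact Function.iterate_minimalPeriod
  · simp only [Fin.val_succ, Fin.val_castSucc, Function.iterate_succ_apply']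
    exact hrel _ (hmem i)

end Iteration

section Matching

variable {W F : Type*} {prefW : W → F → F → Prop} {prefF : F → W → W → Prop} {S : Set (W × F)}
  {μ : W ≃ F} {w w' : W} {f f' : F}

/-- `w` rejects `f` in `S`: some firm that `w` prefers to `f` has `w` as its best worker in `S`.
This is one of the two ways of being unattractive; rejection of a worker by a firm is the same
notion for `Prod.swap ⁻¹' S`, with the two sides exchanged. -/
def Rejects (prefW : W → F → F → Prop) (prefF : F → W → W → Prop) (S : Set (W × F))
    (w : W) (f : F) : Prop :=
  ∃ f', prefW w f' f ∧ IsBest (prefF f') {w' | (w', f') ∈ S} w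

/-- `S` is normal if its members are exactly the pairs that are not unattractive in `S`. This is
more than being a fixed point of `delta`, which says nothing about the pairs outside `S`. -/
def IsNormal (prefW : W → F → F → Prop) (prefF : F → W → W → Prop) (S : Set (W × F)) : Prop :=
  ∀ w f, (w, f) ∈ S ↔ ¬ Unattractive prefW prefF S w f

theorem unattractive_iff_rejects :
    Unattractive prefW prefF S w f ↔
      Rejects prefW prefF S w f ∨ Rejects prefF prefW (Prod.swap ⁻¹' S) f w :=
  or_congr (exists_congr fun _ => and_left_comm) (exists_congr fun _ => and_left_comm)

theorem unattractive_swap :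
    Unattractive prefF prefW (Prod.swap ⁻¹' S) f w ↔ Unattractive prefW prefF S w f :=
  or_comm

theorem delta_swap :
    delta prefF prefW (Prod.swap ⁻¹' S) = Prod.swap ⁻¹' delta prefW prefF S :=
  Set.ext fun _ => and_congr_right' (not_congr unattractive_swap)

theorem IsNormal.swap (hS : IsNormal prefW prefF S) :
    IsNormal prefF prefW (Prod.swap ⁻¹' S) :=
  fun f w => (hS w f).trans (not_congr unattractive_swap.symm)

theorem IsStableMatching.symm (hμ : IsStableMatching prefW prefF μ) :
    IsStableMatching prefF prefW μ.symm :=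
  fun f w hb => hμ w f hb.symm

theorem delta_subset : delta prefW prefF S ⊆ S := Set.sep_subset _ _

/-- If `w` rejects `f` because of several firms, the pair of `w` with the best of these firms is
itself not unattractive, so it survives and keeps witnessing the rejection. -/
theorem Rejects.delta [Finite F] [∀ w, IsStrictTotalOrder F (prefW w)]
    [∀ f, Std.Asymm (prefF f)] (h : Rejects prefW prefF S w f) :
    Rejects prefW prefF (delta prefW prefF S) w f := by
  obtain ⟨f', hbest⟩ := exists_isBest (r := prefW w) h
  obtain ⟨hpref, htop⟩ := hbest.1
  refine ⟨f', hpref, htop.mono (fun _ hw => delta_subset hw) ⟨htop.1, fun hun => ?_⟩⟩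
  rcases unattractive_iff_rejects.1 hun with ⟨f'', hpref', htop'⟩ | ⟨w', hpref', hbest'⟩
  · exact hbest.not_rel ⟨trans_of (prefW w) hpref' hpref, htop'⟩ hpref'
  · exact htop.not_rel hbest'.1 hpref'

theorem Unattractive.delta [Finite W] [Finite F] [∀ w, IsStrictTotalOrder F (prefW w)]
    [∀ f, IsStrictTotalOrder W (prefF f)] (h : Unattractive prefW prefF S w f) :
    Unattractive prefW prefF (delta prefW prefF S) w f := by
  rw [unattractive_iff_rejects, ← delta_swap]
  exact (unattractive_iff_rejects.1 h).imp Rejects.delta Rejects.delta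

theorem isNormal_normalForm [Fintype W] [Fintype F] [∀ w, IsStrictTotalOrder F (prefW w)]
    [∀ f, IsStrictTotalOrder W (prefF f)] :
    IsNormal prefW prefF (NormalForm W F prefW prefF) := by
  have hfixed : delta prefW prefF (NormalForm W F prefW prefF) = NormalForm W F prefW prefF := by
    rw [NormalForm, ← Nat.card_eq_fintype_card]
    exact isFixedPt_iterate_card (fun _ => delta_subset) _
  have hdeleted : ∀ w f, (w, f) ∉ NormalForm W F prefW prefF →
      Unattractive prefW prefF (NormalForm W F prefW prefF) w f := by
    refine Function.Iterate.rec (fun S => ∀ w f, (w, f) ∉ S → Unattractive prefW prefF S w f)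
      (fun _ _ h => absurd (Set.mem_univ _) h) (fun S ih w f hmem => Unattractive.delta ?_) _
    by_contra hun
    exact hmem ⟨not_not.1 (mt (ih w f) hun), hun⟩
  refine fun w f => ⟨fun hmem => ?_, not_imp_comm.1 (hdeleted w f)⟩
  rw [← hfixed] at hmem
  exact hmem.2

theorem IsStableMatching.not_rejects [∀ w, Std.Irrefl (prefW w)]
    (hμ : IsStableMatching prefW prefF μ) (hmem : ∀ w, (w, μ w) ∈ S) (w : W) :
    ¬ Rejects prefW prefF S w (μ w) := by
  rintro ⟨f, hpref, -, htop⟩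
  have hne : μ.symm f ≠ w := by
    rintro rfl
    exact irrefl_of (prefW _) f (by simpa using hpref)
  exact hμ w f ⟨hpref, htop (μ.symm f) hne (by simpa using hmem (μ.symm f))⟩

theorem IsStableMatching.mem_delta [∀ w, Std.Irrefl (prefW w)] [∀ f, Std.Irrefl (prefF f)]
    (hμ : IsStableMatching prefW prefF μ) (hmem : ∀ w, (w, μ w) ∈ S) (w : W) :
    (w, μ w) ∈ delta prefW prefF S := by
  refine ⟨hmem w, fun hun => ?_⟩
  rcases unattractive_iff_rejects.1 hun with h | h
  · exact hμ.not_rejects hmem w h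
  · have hmem' : ∀ f, (f, μ.symm f) ∈ Prod.swap ⁻¹' S := fun f => by
      simpa using hmem (μ.symm f)
    exact hμ.symm.not_rejects hmem' (μ w) (by simpa using h)

theorem IsStableMatching.mem_normalForm [Fintype W] [Fintype F]
    [∀ w, Std.Irrefl (prefW w)] [∀ f, Std.Irrefl (prefF f)]
    (hμ : IsStableMatching prefW prefF μ) : ∀ w, (w, μ w) ∈ NormalForm W F prefW prefF :=
  Function.Iterate.rec (fun S => ∀ w, (w, μ w) ∈ S) (fun _ => Set.mem_univ _)
    (fun _ => hμ.mem_delta) _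

namespace IsNormal

theorem rejects_or_rejects (hS : IsNormal prefW prefF S) (h : (w, f) ∉ S) :
    Rejects prefW prefF S w f ∨ Rejects prefF prefW (Prod.swap ⁻¹' S) f w :=
  unattractive_iff_rejects.1 (not_not.1 (mt (hS w f).2 h))

theorem not_rel_of_isBest (hS : IsNormal prefW prefF S)
    (hf : IsBest (prefW w) {f | (w, f) ∈ S} f) (hw' : (w', f) ∈ S) : ¬ prefF f w w' :=
  fun hpref => (hS w' f).1 hw' (unattractive_iff_rejects.2 (.inr ⟨w, hpref, hf⟩))

theorem eq_of_isBest [∀ f, Std.Trichotomous (prefF f)] (hS : IsNormal prefW prefF S)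
    (hw : IsBest (prefW w) {f | (w, f) ∈ S} f) (hw' : IsBest (prefW w') {f | (w', f) ∈ S} f) :
    w = w' := by
  rcases trichotomous_of (prefF f) w w' with h | h | h
  · exact absurd h (hS.not_rel_of_isBest hw hw'.1)
  · exact h
  · exact absurd h (hS.not_rel_of_isBest hw' hw.1)

/-- If `w` had no firm in `S`, every firm would be the best firm of some worker; by counting, `w`
would be one of these workers. -/
theorem exists_mem [Finite W] [∀ w, Std.Asymm (prefW w)] (hS : IsNormal prefW prefF S)
    (hcard : Nat.card W ≤ Nat.card F) (w : W) : ∃ f, (w, f) ∈ S := by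
  by_contra! hempty
  have hbest : ∀ f, ∃ w', IsBest (prefW w') {f | (w', f) ∈ S} f := fun f => by
    rcases hS.rejects_or_rejects (hempty f) with ⟨f', -, htop⟩ | ⟨w', -, htop⟩
    · exact absurd htop.1 (hempty f')
    · exact ⟨w', htop⟩
  choose g hg using hbest
  have hinj : g.Injective := fun f f' h => (hg f).eq (h ▸ hg f')
  obtain ⟨f, rfl⟩ := (hinj.bijective_of_nat_card_le hcard).2 w
  exact hempty f (hg f).1

theorem isStableMatching_of_isBest [∀ w, IsStrictOrder F (prefW w)]
    [∀ f, Std.Asymm (prefF f)] (hS : IsNormal prefW prefF S)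
    (hμ : ∀ w, IsBest (prefW w) {f | (w, f) ∈ S} (μ w)) : IsStableMatching prefW prefF μ := by
  rintro w f ⟨hw, hf⟩
  have hmem : (w, f) ∉ S := fun hmem => (hμ w).not_rel hmem hw
  rcases hS.rejects_or_rejects hmem with ⟨f', hpref, htop⟩ | ⟨w', hpref, hbest⟩
  · exact (hμ w).not_rel htop.1 (trans_of (prefW w) hpref hw)
  · have hw' : μ.symm f = w' := μ.symm_apply_eq.2 (hbest.eq (hμ w'))
    exact asymm_of (prefF f) hpref (hw' ▸ hf)

theorem exists_isStableMatching_isBest [Finite W] [Finite F]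
    [∀ w, IsStrictTotalOrder F (prefW w)] [∀ f, IsStrictTotalOrder W (prefF f)]
    (hS : IsNormal prefW prefF S) (hcard : Nat.card W = Nat.card F) :
    ∃ μ : W ≃ F, IsStableMatching prefW prefF μ ∧
      ∀ w, IsBest (prefW w) {f | (w, f) ∈ S} (μ w) := by
  choose g hg using fun w => exists_isBest (r := prefW w) (hS.exists_mem hcard.le w)
  have hinj : g.Injective := fun w w' h => hS.eq_of_isBest (hg w) (h ▸ hg w')
  exact ⟨.ofBijective g (hinj.bijective_of_nat_card_le hcard.ge),
    hS.isStableMatching_of_isBest hg, hg⟩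

theorem existsUnique_worker [Finite F] [∀ f, IsStrictTotalOrder W (prefF f)]
    (hS : IsNormal prefW prefF S) (hcard : Nat.card F ≤ Nat.card W)
    (h : ∀ w, ∃! f, (w, f) ∈ S) (f : F) : ∃! w, (w, f) ∈ S := by
  have hbest : ∀ w, (w, f) ∈ S → IsBest (prefW w) {f | (w, f) ∈ S} f := fun w hw =>
    ⟨hw, fun _ hne hf' => absurd ((h w).unique hf' hw) hne⟩
  obtain ⟨w, hw⟩ := hS.swap.exists_mem hcard f
  exact ⟨w, hw, fun w' hw' => hS.eq_of_isBest (hbest w' hw') (hbest w hw)⟩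

theorem existsUnique_firm_of_existsUnique_isStableMatching [Finite W] [Finite F]
    [∀ w, IsStrictTotalOrder F (prefW w)] [∀ f, IsStrictTotalOrder W (prefF f)]
    (hS : IsNormal prefW prefF S) (hcard : Nat.card W = Nat.card F)
    (h : ∃! μ : W ≃ F, IsStableMatching prefW prefF μ) (w : W) : ∃! f, (w, f) ∈ S := by
  obtain ⟨μ, hμ, hbest⟩ := hS.exists_isStableMatching_isBest hcard
  obtain ⟨ν, hν, hbest'⟩ := hS.swap.exists_isStableMatching_isBest hcard.symm
  obtain rfl : ν.symm = μ := h.unique hν.symm hμ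
  have hw : IsBest (prefF (ν.symm w)) {w' | (w', ν.symm w) ∈ S} w := by
    simpa using hbest' (ν.symm w)
  refine ⟨ν.symm w, (hbest w).1, fun f hf => ?_⟩
  by_contra hne
  exact hS.swap.not_rel_of_isBest hw hf ((hbest w).2 f hne hf)

theorem exists_arc_of_arc [∀ w, Std.Trichotomous (prefW w)] [∀ f, Std.Trichotomous (prefF f)]
    (hS : IsNormal prefW prefF S) {p q : W × F} (h : Arc prefW prefF S p q) :
    ∃ q', Arc prefW prefF S q q' := by
  by_contra! hsink
  obtain ⟨w, f⟩ := p
  obtain ⟨w', f'⟩ := q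
  obtain ⟨hp, hq, ⟨rfl, hpref⟩ | ⟨rfl, hpref⟩⟩ := h
  · have hbest : IsBest (prefF f') {v | (v, f') ∈ S} w :=
      isBest_of_forall_not_rel hq fun v hv hrel => hsink (v, f') ⟨hq, hv, .inr ⟨rfl, hrel⟩⟩
    exact hS.swap.not_rel_of_isBest hbest hp hpref
  · have hbest : IsBest (prefW w') {g | (w', g) ∈ S} f :=
      isBest_of_forall_not_rel hq fun g hg hrel => hsink (w', g) ⟨hq, hg, .inl ⟨rfl, hrel⟩⟩
    exact hS.not_rel_of_isBest hbest hp hpref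

theorem hasDirectedCycle_of_arc [Finite W] [Finite F] [∀ w, Std.Trichotomous (prefW w)]
    [∀ f, Std.Trichotomous (prefF f)] (hS : IsNormal prefW prefF S) {p q : W × F}
    (h : Arc prefW prefF S p q) : HasDirectedCycle prefW prefF S :=
  exists_cycle_of_forall_exists_rel (T := {b | ∃ a, Arc prefW prefF S a b}) ⟨q, p, h⟩
    fun b ⟨_, hb⟩ => (hS.exists_arc_of_arc hb).imp fun _ hc => ⟨⟨b, hc⟩, hc⟩

theorem existsUnique_firm_of_not_hasDirectedCycle [Finite W] [Finite F]
    [∀ w, IsStrictTotalOrder F (prefW w)] [∀ f, Std.Trichotomous (prefF f)]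
    (hS : IsNormal prefW prefF S) (hcard : Nat.card W ≤ Nat.card F)
    (h : ¬ HasDirectedCycle prefW prefF S) (w : W) : ∃! f, (w, f) ∈ S := by
  have hrel : ∀ f f', (w, f) ∈ S → (w, f') ∈ S → ¬ prefW w f' f := fun f f' hf hf' hpref =>
    h (hS.hasDirectedCycle_of_arc (p := (w, f)) (q := (w, f')) ⟨hf, hf', .inl ⟨rfl, hpref⟩⟩)
  obtain ⟨f, hf⟩ := hS.exists_mem hcard w
  refine ⟨f, hf, fun f' hf' => ?_⟩
  exact Std.Trichotomous.trichotomous (r := prefW w) f' f (hrel f f' hf hf') (hrel f' f hf' hf)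

end IsNormal

theorem not_arc_of_existsUnique [∀ w, Std.Irrefl (prefW w)] [∀ f, Std.Irrefl (prefF f)]
    (hW : ∀ w, ∃! f, (w, f) ∈ S) (hF : ∀ f, ∃! w, (w, f) ∈ S) (p q : W × F) :
    ¬ Arc prefW prefF S p q := by
  obtain ⟨w, f⟩ := p
  obtain ⟨w', f'⟩ := q
  rintro ⟨hp, hq, ⟨rfl, hpref⟩ | ⟨rfl, hpref⟩⟩
  · obtain rfl : f = f' := (hW w).unique hp hq
    exact irrefl_of (prefW w) f hpref
  · obtain rfl : w = w' := (hF f).unique hp hq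
    exact irrefl_of (prefF f) w hpref

theorem not_hasDirectedCycle_of_existsUnique [∀ w, Std.Irrefl (prefW w)]
    [∀ f, Std.Irrefl (prefF f)] (hW : ∀ w, ∃! f, (w, f) ∈ S) (hF : ∀ f, ∃! w, (w, f) ∈ S) :
    ¬ HasDirectedCycle prefW prefF S :=
  fun ⟨_, _, hn, _, _, harc⟩ => not_arc_of_existsUnique hW hF _ _ (harc ⟨0, hn⟩)

end Matching

/-- The three characterisations of a unique stable matching are equivalent. -/
theorem unique_stable_tfae {W F : Type*} [Fintype W] [Fintype F] [Nonempty W]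
    (hcard : Fintype.card W = Fintype.card F)
    (prefW : W → F → F → Prop) (prefF : F → W → W → Prop)
    (hW : ∀ w, IsStrictTotalOrder F (prefW w))
    (hF : ∀ f, IsStrictTotalOrder W (prefF f)) :
    List.TFAE
      [ (∃! μ : W ≃ F, IsStableMatching prefW prefF μ),
        ¬ HasDirectedCycle prefW prefF (NormalForm W F prefW prefF),
        (∀ w : W, ∃! f : F, (w, f) ∈ NormalForm W F prefW prefF) ∧
          (∀ f : F, ∃! w : W, (w, f) ∈ NormalForm W F prefW prefF) ] := by
  have hcard' : Nat.card W = Nat.card F := by simpa only [Nat.card_eq_fintype_card] using hcard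
  have hS : IsNormal prefW prefF (NormalForm W F prefW prefF) := isNormal_normalForm
  tfae_have 1 → 3 := fun h => by
    have hfirm := hS.existsUnique_firm_of_existsUnique_isStableMatching hcard' h
    exact ⟨hfirm, hS.existsUnique_worker hcard'.ge hfirm⟩
  tfae_have 3 → 2 := fun h => not_hasDirectedCycle_of_existsUnique h.1 h.2
  tfae_have 2 → 3 := fun h => by
    have hfirm := hS.existsUnique_firm_of_not_hasDirectedCycle hcard'.le h
    exact ⟨hfirm, hS.existsUnique_worker hcard'.ge hfirm⟩
  tfae_have 3 → 1 := fun ⟨hfirm, _⟩ => by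
    obtain ⟨μ, hμ, -⟩ := hS.exists_isStableMatching_isBest hcard'
    exact ⟨μ, hμ, fun ν hν => Equiv.ext fun w =>
      (hfirm w).unique (hν.mem_normalForm w) (hμ.mem_normalForm w)⟩
  tfae_finish
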